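/- For every β ≥ 0, c ≥ 0 and N ∈ ℕ, 𝒫(β,c) − p_N(β,c) = (1/2) Σ_{R=1}^∞ ((1−e^{−β})^R / R) Σ_{s∈[q]^R} ∫_0^c ⟨⟨ (ρ_{Σ_R}(s) − q^{−R})² ⟩⟩_{N,β,c'} dc'. -/

import Mathlib

open MeasureTheory Filter

/-- Poisson probability mass function with parameter `lam`. -/
noncomputable def poissonPMF (lam : ℝ) (k : ℕ) : ℝ :=
  Real.exp (-lam) * lam ^ k / (Nat.factorial k)

/-- Potts Hamiltonian `H_N(σ, J) = Σ_{i,j} J_{ij} δ(σ_i, σ_j)`. -/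
noncomputable def potts.H (q N : ℕ) (σ : Fin N → Fin q) (J : Fin N → Fin N → ℝ) : ℝ :=
  ∑ i, ∑ j, J i j * (if σ i = σ j then (1 : ℝ) else 0)

/-- Partition function `Z_N(J)`. -/
noncomputable def potts.Z (q N : ℕ) (J : Fin N → Fin N → ℝ) : ℝ :=
  ∑ σ : Fin N → Fin q, Real.exp (- potts.H q N σ J)

/-- Expectation over the Poissonian disorder: the entries `J_{ij}` are independent
Poisson random variables with means `c_{ij} / (2N)`. -/
noncomputable def potts.E (N : ℕ) (c : Fin N → Fin N → ℝ)
    (g : (Fin N → Fin N → ℕ) → ℝ) : ℝ :=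
  ∑' J : Fin N → Fin N → ℕ,
    (∏ i, ∏ j, poissonPMF (c i j / (2 * N)) (J i j)) * g J

/-- Quenched pressure for a general nonnegative connectivity matrix `c`. -/
noncomputable def potts.pmat (q N : ℕ) (β : ℝ) (c : Fin N → Fin N → ℝ) : ℝ :=
  potts.E N c (fun J => (1 / N) * Real.log (potts.Z q N (fun i j => β * (J i j : ℝ))))

/-- Quenched pressure for the constant connectivity matrix `c_{ij} ≡ c`. -/
noncomputable def potts.p (q N : ℕ) (β c : ℝ) : ℝ :=
  potts.pmat q N β (fun _ _ => c)

/-- Annealed pressure `𝒫(β, c) = ln q + (c/2) ln(1 - (1 - e^{-β})/q)`. -/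
noncomputable def potts.annealed (q : ℕ) (β c : ℝ) : ℝ :=
  Real.log q + (c / 2) * Real.log (1 - (1 - Real.exp (-β)) / q)

/-- Boltzmann-Gibbs measure `ω_{N,J}(σ)`. -/
noncomputable def potts.omega (q N : ℕ) (J : Fin N → Fin N → ℝ) (σ : Fin N → Fin q) : ℝ :=
  Real.exp (- potts.H q N σ J) / potts.Z q N J

/-- Quenched Gibbs average `⟨⟨F⟩⟩_{N,β,c}` of a function of `R` replicas. -/
noncomputable def potts.replicaQuenched (q N R : ℕ) (β c : ℝ)
    (F : (Fin R → Fin N → Fin q) → ℝ) : ℝ :=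
  potts.E N (fun _ _ => c) (fun J =>
    ∑ S : Fin R → Fin N → Fin q, F S *
      ∏ r, potts.omega q N (fun a b => β * (J a b : ℝ)) (S r))

/-- The `R`-replica empirical measure `ρ_{Σ_R}(s)`. -/
noncomputable def potts.rho (q N R : ℕ) (S : Fin R → Fin N → Fin q)
    (s : Fin R → Fin q) : ℝ :=
  (1 / N) * ∑ i, ∏ r, (if S r i = s r then (1 : ℝ) else 0)

/-!
The expectation of `g J` under independent Poisson couplings of mean `l` has `l`-derivative
`∑ e, 𝔼[g (J + 1_e) - g J]`. For `g = log Z`, adding `β` to the coupling of `(i, j)` multiplies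
`Z` by `1 - (1 - e^{-β}) ⟨δ(σ_i, σ_j)⟩`, so `2 ∂p_N/∂c` is the disorder average of
`N⁻² ∑_{i,j} log (1 - (1 - e^{-β}) ⟨δ(σ_i, σ_j)⟩)`. In the Taylor expansion of this logarithm,
`⟨δ(σ_i, σ_j)⟩ ^ R` is an average over `R` independent replicas, and
`N⁻² ∑_{i,j} ∏_r δ(σ_i^(r), σ_j^(r)) - q^{-R} = ∑_s (ρ(s) - q^{-R})²`; the terms `q^{-R}` resum
to the logarithm in the annealed pressure. Integrating over `[0, c]` gives the sum rule.
-/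

section Poisson

variable {ι : Type*} [Fintype ι]

/-- The joint mass function of independent Poisson variables `J i`, `i : ι`, of common mean `l`.
As for `poissonPMF`, the parameter `l` ranges over all reals (the weights are signed for `l < 0`),
so that expectations can be differentiated at `l = 0`. -/
noncomputable def poissonWeight (l : ℝ) (J : ι → ℕ) : ℝ :=
  ∏ i, poissonPMF l (J i)

/-- The expectation of `g` under independent Poisson variables of common mean `l`. -/
noncomputable def poissonExpect (l : ℝ) (g : (ι → ℕ) → ℝ) : ℝ :=
  ∑' J, poissonWeight l J * g J

/-- At most exponential growth in `∑ i, J i`: the class of observables used here whose Poisson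
expectations converge for every mean. -/
def HasExpGrowth (g : (ι → ℕ) → ℝ) : Prop :=
  ∃ A K : ℝ, ∀ J, |g J| ≤ A * Real.exp (K * ∑ i, (J i : ℝ))

theorem HasExpGrowth.of_abs_le {g : (ι → ℕ) → ℝ} {A : ℝ} (hg : ∀ J, |g J| ≤ A) :
    HasExpGrowth g :=
  ⟨A, 0, by simpa using hg⟩

theorem hasExpGrowth_const (a : ℝ) : HasExpGrowth fun _ : ι → ℕ ↦ a :=
  .of_abs_le fun _ ↦ le_rfl

theorem HasExpGrowth.of_abs_le_add_mul_sum {g : (ι → ℕ) → ℝ} {a b : ℝ} (ha : 0 ≤ a) (hb : 0 ≤ b)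
    (hg : ∀ J, |g J| ≤ a + b * ∑ i, (J i : ℝ)) : HasExpGrowth g := by
  refine ⟨a + b, 1, fun J ↦ (hg J).trans ?_⟩
  have hsum : (0 : ℝ) ≤ ∑ i, (J i : ℝ) := by positivity
  have hexp := Real.add_one_le_exp (∑ i, (J i : ℝ))
  rw [one_mul, add_mul]
  gcongr
  · exact le_mul_of_one_le_right ha (by linarith)
  · linarith

theorem HasExpGrowth.abs {g : (ι → ℕ) → ℝ} (hg : HasExpGrowth g) :
    HasExpGrowth fun J ↦ |g J| := by
  simpa only [HasExpGrowth, abs_abs] using hg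

theorem HasExpGrowth.shift [DecidableEq ι] {g : (ι → ℕ) → ℝ} (hg : HasExpGrowth g) (e : ι) :
    HasExpGrowth fun J ↦ g (J + Pi.single e 1) := by
  obtain ⟨A, K, hAK⟩ := hg
  refine ⟨A * Real.exp K, K, fun J ↦ (hAK _).trans_eq ?_⟩
  have hsum : ∑ i, ((J + Pi.single e 1 : ι → ℕ) i : ℝ) = 1 + ∑ i, (J i : ℝ) := by
    simp [Finset.sum_add_distrib, Pi.single_apply, add_comm]
  rw [hsum, mul_add, mul_one, Real.exp_add, mul_assoc]

theorem poissonPMF_nonneg {l : ℝ} (hl : 0 ≤ l) (k : ℕ) : 0 ≤ poissonPMF l k := by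
  unfold poissonPMF
  positivity

theorem abs_poissonPMF_le {l L : ℝ} (hl : |l| ≤ L) (k : ℕ) :
    |poissonPMF l k| ≤ Real.exp (2 * L) * poissonPMF L k := by
  have hexp : Real.exp (-l) ≤ Real.exp (2 * L) * Real.exp (-L) := by
    rw [← Real.exp_add, Real.exp_le_exp]
    linarith [(abs_le.1 hl).1]
  calc |poissonPMF l k| = Real.exp (-l) * |l| ^ k / k.factorial := by
        simp [poissonPMF, abs_div, abs_mul]
    _ ≤ Real.exp (2 * L) * Real.exp (-L) * L ^ k / k.factorial := by gcongr
    _ = Real.exp (2 * L) * poissonPMF L k := by rw [poissonPMF]; ring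

theorem poissonPMF_mul_exp (l K : ℝ) (k : ℕ) :
    poissonPMF l k * Real.exp (K * k) =
      Real.exp (l * Real.exp K - l) * poissonPMF (l * Real.exp K) k := by
  have hexp : Real.exp (-l) = Real.exp (l * Real.exp K - l) * Real.exp (-(l * Real.exp K)) := by
    rw [← Real.exp_add]
    ring_nf
  rw [poissonPMF, poissonPMF, mul_comm K, Real.exp_nat_mul, mul_pow, hexp]
  ring

theorem hasDerivAt_poissonPMF (l : ℝ) (k : ℕ) :
    HasDerivAt (fun l ↦ poissonPMF l k)
      ((if k = 0 then 0 else poissonPMF l (k - 1)) - poissonPMF l k) l := by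
  have hderiv := (((hasDerivAt_neg l).exp).mul (hasDerivAt_pow k l)).div_const (k.factorial : ℝ)
  refine hderiv.congr_deriv ?_
  cases k with
  | zero => simp [poissonPMF]
  | succ k =>
    simp only [poissonPMF, Nat.succ_ne_zero, if_false, Nat.add_sub_cancel, Nat.factorial_succ]
    push_cast
    field_simp
    ring

theorem poissonWeight_nonneg {l : ℝ} (hl : 0 ≤ l) (J : ι → ℕ) : 0 ≤ poissonWeight l J :=
  Finset.prod_nonneg fun i _ ↦ poissonPMF_nonneg hl (J i)

theorem abs_poissonWeight_le {l L : ℝ} (hl : |l| ≤ L) (J : ι → ℕ) :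
    |poissonWeight l J| ≤ Real.exp (2 * L) ^ Fintype.card ι * poissonWeight L J := by
  rw [poissonWeight, Finset.abs_prod, poissonWeight, ← Finset.card_univ, ← Finset.prod_const,
    ← Finset.prod_mul_distrib]
  exact Finset.prod_le_prod (fun _ _ ↦ abs_nonneg _) fun i _ ↦ abs_poissonPMF_le hl (J i)

theorem poissonWeight_mul_exp (l K : ℝ) (J : ι → ℕ) :
    poissonWeight l J * Real.exp (K * ∑ i, (J i : ℝ)) =
      Real.exp (l * Real.exp K - l) ^ Fintype.card ι * poissonWeight (l * Real.exp K) J := by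
  simp only [poissonWeight, Finset.mul_sum, Real.exp_sum, ← Finset.prod_mul_distrib,
    poissonPMF_mul_exp]
  simp [Finset.prod_mul_distrib]

theorem summable_poissonWeight {l : ℝ} (hl : 0 ≤ l) :
    Summable fun J : ι → ℕ ↦ poissonWeight l J := by
  lift l to NNReal using hl
  let μ : Measure (ι → ℕ) := Measure.pi fun _ ↦ ProbabilityTheory.poissonMeasure l
  have hμ (J : ι → ℕ) : poissonWeight (l : ℝ) J = (μ.toPMF J).toReal := by
    simp only [Measure.toPMF_apply, μ, Measure.pi_singleton, ENNReal.toReal_prod]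
    exact Finset.prod_congr rfl fun i _ ↦
      (ProbabilityTheory.poissonMeasure_real_singleton l (J i)).symm
  simp only [hμ]
  exact ENNReal.summable_toReal μ.toPMF.tsum_coe_ne_top

theorem HasExpGrowth.summable {g : (ι → ℕ) → ℝ} (hg : HasExpGrowth g) (l : ℝ) :
    Summable fun J ↦ poissonWeight l J * g J := by
  obtain ⟨A, K, hAK⟩ := hg
  have hsum : Summable fun J : ι → ℕ ↦ Real.exp (2 * |l|) ^ Fintype.card ι * A *
      (Real.exp (|l| * Real.exp K - |l|) ^ Fintype.card ι *
        poissonWeight (|l| * Real.exp K) J) :=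
    ((summable_poissonWeight (by positivity)).mul_left _).mul_left _
  refine hsum.of_norm_bounded fun J ↦ ?_
  have hweight : 0 ≤ poissonWeight |l| J := poissonWeight_nonneg (abs_nonneg l) J
  calc ‖poissonWeight l J * g J‖ = |poissonWeight l J| * |g J| := abs_mul _ _
    _ ≤ Real.exp (2 * |l|) ^ Fintype.card ι * poissonWeight |l| J *
          (A * Real.exp (K * ∑ i, (J i : ℝ))) :=
        mul_le_mul (abs_poissonWeight_le le_rfl J) (hAK J) (abs_nonneg _) (by positivity)
    _ = _ := by rw [← poissonWeight_mul_exp]; ring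

theorem HasExpGrowth.hasSum {g : (ι → ℕ) → ℝ} (hg : HasExpGrowth g) (l : ℝ) :
    HasSum (fun J ↦ poissonWeight l J * g J) (poissonExpect l g) :=
  (hg.summable l).hasSum

theorem poissonExpect_zero (g : (ι → ℕ) → ℝ) : poissonExpect 0 g = g 0 := by
  rw [poissonExpect, tsum_eq_single 0]
  · simp [poissonWeight, poissonPMF]
  · intro J hJ
    obtain ⟨i, hi⟩ := Function.ne_iff.1 hJ
    have hweight : poissonWeight 0 J = 0 :=
      Finset.prod_eq_zero (Finset.mem_univ i) (by simp_all [poissonPMF])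
    rw [hweight, zero_mul]

theorem poissonExpect_const_mul (l a : ℝ) (g : (ι → ℕ) → ℝ) :
    poissonExpect l (fun J ↦ a * g J) = a * poissonExpect l g := by
  simp only [poissonExpect, mul_left_comm _ a, tsum_mul_left]

theorem poissonExpect_sub (l : ℝ) {g h : (ι → ℕ) → ℝ} (hg : HasExpGrowth g)
    (hh : HasExpGrowth h) :
    poissonExpect l (fun J ↦ g J - h J) = poissonExpect l g - poissonExpect l h := by
  rw [poissonExpect, ← ((hg.hasSum l).sub (hh.hasSum l)).tsum_eq]
  simp only [mul_sub]

theorem poissonExpect_sum {κ : Type*} (s : Finset κ) (l : ℝ) {g : κ → (ι → ℕ) → ℝ}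
    (hg : ∀ k ∈ s, HasExpGrowth (g k)) :
    poissonExpect l (fun J ↦ ∑ k ∈ s, g k J) = ∑ k ∈ s, poissonExpect l (g k) := by
  rw [poissonExpect, ← (hasSum_sum fun k hk ↦ (hg k hk).hasSum l).tsum_eq]
  simp only [Finset.mul_sum]

theorem hasSum_poissonExpect_of_dominated {κ : Type*} (l : ℝ) {f : κ → (ι → ℕ) → ℝ}
    {F : (ι → ℕ) → ℝ} {b : κ → ℝ} (hb : Summable b) (hfb : ∀ k J, |f k J| ≤ b k)
    (hf : ∀ J, HasSum (fun k ↦ f k J) (F J)) :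
    HasSum (fun k ↦ poissonExpect l (f k)) (poissonExpect l F) := by
  have hgrowth (k : κ) : HasExpGrowth (f k) := .of_abs_le (hfb k)
  have hbound : Summable fun J : ι → ℕ ↦ |poissonWeight l J| * ∑' k, b k := by
    simpa using ((hasExpGrowth_const (ι := ι) 1).summable l).abs.mul_right (∑' k, b k)
  have htendsto := tendsto_tsum_of_dominated_convergence hbound
    (fun J ↦ (hf J).const_mul (poissonWeight l J)) (.of_forall fun s J ↦ ?_)
  · simp only [HasSum, ← poissonExpect_sum _ l fun k _ ↦ hgrowth k]
    exact htendsto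
  · rw [norm_mul, Real.norm_eq_abs, Real.norm_eq_abs]
    gcongr
    calc |∑ k ∈ s, f k J| ≤ ∑ k ∈ s, |f k J| := Finset.abs_sum_le_sum_abs _ _
      _ ≤ ∑ k ∈ s, b k := Finset.sum_le_sum fun k _ ↦ hfb k J
      _ ≤ ∑' k, b k := hb.sum_le_tsum s fun k _ ↦ (abs_nonneg _).trans (hfb k J)

section Generator

variable [DecidableEq ι]

/-- The rate at which mass enters `J` by a jump of coordinate `e`, when each coordinate performs
a unit-rate Poisson process with time `l`. -/
noncomputable def poissonInflow (e : ι) (l : ℝ) (J : ι → ℕ) : ℝ :=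
  if J e = 0 then 0 else poissonWeight l (J - Pi.single e 1)

/-- The derivative of `poissonWeight l J` in `l`, i.e. the right-hand side of the Kolmogorov forward
equation of these processes. -/
noncomputable def poissonWeightDeriv (l : ℝ) (J : ι → ℕ) : ℝ :=
  ∑ e, (poissonInflow e l J - poissonWeight l J)

/-- The generator of independent unit-rate Poisson processes indexed by `ι`. -/
def poissonGenerator (g : (ι → ℕ) → ℝ) (J : ι → ℕ) : ℝ :=
  ∑ e, (g (J + Pi.single e 1) - g J)

theorem poissonInflow_eq_prod_erase (e : ι) (l : ℝ) (J : ι → ℕ) :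
    poissonInflow e l J = (∏ i ∈ Finset.univ.erase e, poissonPMF l (J i)) *
      if J e = 0 then 0 else poissonPMF l (J e - 1) := by
  have herase : ∏ i ∈ Finset.univ.erase e, poissonPMF l ((J - Pi.single e 1 : ι → ℕ) i) =
      ∏ i ∈ Finset.univ.erase e, poissonPMF l (J i) :=
    Finset.prod_congr rfl fun i hi ↦ by simp [Finset.ne_of_mem_erase hi]
  rw [poissonInflow, mul_ite, mul_zero, poissonWeight,
    ← Finset.prod_erase_mul _ _ (Finset.mem_univ e), herase]
  simp

theorem poissonInflow_shift (e : ι) (l : ℝ) (J : ι → ℕ) :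
    poissonInflow e l (J + Pi.single e 1) = poissonWeight l J := by
  simp [poissonInflow]

theorem abs_poissonInflow_le (e : ι) {l L : ℝ} (hl : |l| ≤ L) (J : ι → ℕ) :
    |poissonInflow e l J| ≤ Real.exp (2 * L) ^ Fintype.card ι * poissonInflow e L J := by
  unfold poissonInflow
  split_ifs
  · simp
  · exact abs_poissonWeight_le hl _

theorem hasDerivAt_poissonWeight (l : ℝ) (J : ι → ℕ) :
    HasDerivAt (fun l ↦ poissonWeight l J) (poissonWeightDeriv l J) l := by
  refine (HasDerivAt.fun_finsetProd fun i _ ↦ hasDerivAt_poissonPMF l (J i)).congr_deriv ?_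
  refine Finset.sum_congr rfl fun e _ ↦ ?_
  rw [smul_eq_mul, mul_sub, ← poissonInflow_eq_prod_erase, poissonWeight,
    Finset.prod_erase_mul _ _ (Finset.mem_univ e)]

theorem hasSum_poissonInflow_mul (e : ι) (l : ℝ) {g : (ι → ℕ) → ℝ} (hg : HasExpGrowth g) :
    HasSum (fun J ↦ poissonInflow e l J * g J)
      (poissonExpect l fun J ↦ g (J + Pi.single e 1)) := by
  have hinj : Function.Injective fun J : ι → ℕ ↦ J + Pi.single e 1 := add_left_injective _
  refine (hinj.hasSum_iff fun J hJ ↦ ?_).1 ?_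
  · have hzero : J e = 0 := by
      by_contra hne
      refine hJ ⟨J - Pi.single e 1, tsub_add_cancel_of_le fun i ↦ ?_⟩
      rcases eq_or_ne i e with rfl | hi
      · simpa using Nat.one_le_iff_ne_zero.2 hne
      · simp [hi]
    simp [poissonInflow, hzero]
  · simpa only [Function.comp_def, poissonInflow_shift] using (hg.shift e).hasSum l

theorem hasSum_poissonWeightDeriv_mul (l : ℝ) {g : (ι → ℕ) → ℝ} (hg : HasExpGrowth g) :
    HasSum (fun J ↦ poissonWeightDeriv l J * g J)
      (poissonExpect l (poissonGenerator g)) := by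
  have hforward : HasSum (fun J ↦ poissonWeightDeriv l J * g J)
      (∑ e, ((poissonExpect l fun J ↦ g (J + Pi.single e 1)) - poissonExpect l g)) := by
    simp only [poissonWeightDeriv, Finset.sum_mul, sub_mul]
    exact hasSum_sum fun e _ ↦ (hasSum_poissonInflow_mul e l hg).sub (hg.hasSum l)
  have hbackward : HasSum (fun J ↦ poissonWeight l J * poissonGenerator g J)
      (∑ e, ((poissonExpect l fun J ↦ g (J + Pi.single e 1)) - poissonExpect l g)) := by
    simp only [poissonGenerator, Finset.mul_sum, mul_sub]
    exact hasSum_sum fun e _ ↦ ((hg.shift e).hasSum l).sub (hg.hasSum l)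
  rwa [poissonExpect, hbackward.tsum_eq]

theorem abs_poissonWeightDeriv_mul_le {l L : ℝ} (hl : |l| ≤ L) (g : (ι → ℕ) → ℝ) (J : ι → ℕ) :
    |poissonWeightDeriv l J * g J| ≤
      Real.exp (2 * L) ^ Fintype.card ι *
        ∑ e, (poissonInflow e L J * |g J| + poissonWeight L J * |g J|) := by
  simp only [poissonWeightDeriv, ← add_mul, ← Finset.sum_mul, abs_mul, ← mul_assoc]
  gcongr
  rw [Finset.mul_sum]
  refine (Finset.abs_sum_le_sum_abs _ _).trans (Finset.sum_le_sum fun e _ ↦ ?_)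
  rw [mul_add]
  exact (abs_sub _ _).trans (add_le_add (abs_poissonInflow_le e hl J) (abs_poissonWeight_le hl J))

/- The weights solve the forward equation `hasDerivAt_poissonWeight`; summing it by parts against
`g` moves the difference operator onto `g`. -/
theorem hasDerivAt_poissonExpect (l : ℝ) {g : (ι → ℕ) → ℝ} (hg : HasExpGrowth g) :
    HasDerivAt (fun l ↦ poissonExpect l g) (poissonExpect l (poissonGenerator g)) l := by
  let L : ℝ := |l| + 1
  have hdom : Summable fun J : ι → ℕ ↦ Real.exp (2 * L) ^ Fintype.card ι *
      ∑ e, (poissonInflow e L J * |g J| + poissonWeight L J * |g J|) :=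
    (summable_sum fun e _ ↦
      (hasSum_poissonInflow_mul e L hg.abs).summable.add (hg.abs.summable L)).mul_left _
  have hl : l ∈ Metric.ball (0 : ℝ) L := by simp [L]
  have hderiv := hasDerivAt_tsum_of_isPreconnected hdom Metric.isOpen_ball
    (convex_ball (0 : ℝ) L).isPreconnected
    (fun J y _ ↦ (hasDerivAt_poissonWeight y J).mul_const (g J))
    (fun J y hy ↦ abs_poissonWeightDeriv_mul_le (mem_ball_zero_iff.1 hy).le g J)
    hl (hg.summable l) hl
  exact hderiv.congr_deriv (hasSum_poissonWeightDeriv_mul l hg).tsum_eq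

end Generator

theorem continuous_poissonExpect {g : (ι → ℕ) → ℝ} (hg : HasExpGrowth g) :
    Continuous fun l ↦ poissonExpect l g := by
  classical
  exact continuous_iff_continuousAt.2 fun l ↦ (hasDerivAt_poissonExpect l hg).continuousAt

theorem poissonExpect_const (l a : ℝ) : poissonExpect l (fun _ : ι → ℕ ↦ a) = a := by
  classical
  have hderiv (l : ℝ) : HasDerivAt (fun l ↦ poissonExpect l fun _ : ι → ℕ ↦ a) 0 l := by
    simpa [poissonGenerator, poissonExpect] using
      hasDerivAt_poissonExpect l (hasExpGrowth_const (ι := ι) a)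
  rw [is_const_of_deriv_eq_zero (fun l ↦ (hderiv l).differentiableAt) (fun l ↦ (hderiv l).deriv)
    l 0, poissonExpect_zero]

theorem abs_poissonExpect_le {l : ℝ} (hl : 0 ≤ l) {g : (ι → ℕ) → ℝ} {A : ℝ}
    (hg : ∀ J, |g J| ≤ A) : |poissonExpect l g| ≤ A := by
  rw [← poissonExpect_const (ι := ι) l A]
  refine tsum_of_norm_bounded (E := ℝ) ((hasExpGrowth_const (ι := ι) A).hasSum l) fun J ↦ ?_
  rw [norm_mul, Real.norm_of_nonneg (poissonWeight_nonneg hl J)]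
  exact mul_le_mul_of_nonneg_left (hg J) (poissonWeight_nonneg hl J)

theorem hasSum_integral_poissonExpect_of_dominated {κ : Type*} [Countable κ] {m : ℝ → ℝ}
    (hm : Continuous m) {x y : ℝ} (hm_nonneg : ∀ t ∈ Set.uIoc x y, 0 ≤ m t)
    {f : κ → (ι → ℕ) → ℝ} {F : (ι → ℕ) → ℝ} {b : κ → ℝ} (hb : Summable b)
    (hfb : ∀ k J, |f k J| ≤ b k) (hf : ∀ J, HasSum (fun k ↦ f k J) (F J)) :
    HasSum (fun k ↦ ∫ t in x..y, poissonExpect (m t) (f k))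
      (∫ t in x..y, poissonExpect (m t) F) :=
  intervalIntegral.hasSum_integral_of_dominated_convergence (fun k _ ↦ b k)
    (fun k ↦ ((continuous_poissonExpect (.of_abs_le (hfb k))).comp hm).aestronglyMeasurable)
    (fun k ↦ .of_forall fun t ht ↦ abs_poissonExpect_le (hm_nonneg t ht) (hfb k))
    (.of_forall fun _ _ ↦ hb) intervalIntegrable_const
    (.of_forall fun t _ ↦ hasSum_poissonExpect_of_dominated (m t) hb hfb hf)

end Poisson

theorem prod_ite_eq_ite_eq {ι α M : Type*} [Fintype ι] [DecidableEq α] [CommMonoidWithZero M]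
    (f g : ι → α) : (∏ i, if f i = g i then (1 : M) else 0) = if f = g then 1 else 0 := by
  simp only [Finset.prod_ite_zero, Finset.prod_const_one, funext_iff, Finset.mem_univ,
    true_imp_iff]

theorem summable_abs_pow_succ {x : ℝ} (hx : |x| < 1) : Summable fun R : ℕ ↦ |x| ^ (R + 1) :=
  (summable_nat_add_iff 1).2 (summable_geometric_of_lt_one (abs_nonneg x) hx)

theorem abs_one_sub_exp_neg_lt_one {β : ℝ} (hβ : -Real.log 2 < β) : |1 - Real.exp (-β)| < 1 := by
  have hlt : Real.exp (-β) < 2 := (Real.lt_log_iff_exp_lt two_pos).1 (neg_lt.1 hβ)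
  rw [abs_lt]
  constructor <;> linarith [Real.exp_pos (-β)]

namespace potts

section Gibbs

variable {q N : ℕ}

theorem H_add (σ : Fin N → Fin q) (J K : Fin N → Fin N → ℝ) :
    H q N σ (J + K) = H q N σ J + H q N σ K := by
  simp only [H, Pi.add_apply, add_mul, Finset.sum_add_distrib]

theorem H_single (σ : Fin N → Fin q) (i j : Fin N) (β : ℝ) :
    H q N σ (Pi.single i (Pi.single j β)) = β * if σ i = σ j then 1 else 0 := by
  rw [H, Fintype.sum_eq_single i fun k hk ↦ by simp [hk],
    Fintype.sum_eq_single j fun k hk ↦ by simp [hk]]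
  simp

theorem abs_H_le (σ : Fin N → Fin q) (J : Fin N → Fin N → ℝ) :
    |H q N σ J| ≤ ∑ i, ∑ j, |J i j| := by
  refine (Finset.abs_sum_le_sum_abs _ _).trans (Finset.sum_le_sum fun i _ ↦ ?_)
  refine (Finset.abs_sum_le_sum_abs _ _).trans (Finset.sum_le_sum fun j _ ↦ ?_)
  split_ifs <;> simp

theorem exp_neg_H_add_single (σ : Fin N → Fin q) (J : Fin N → Fin N → ℝ) (i j : Fin N) (β : ℝ) :
    Real.exp (-H q N σ (J + Pi.single i (Pi.single j β))) =
      Real.exp (-H q N σ J) * (1 - (1 - Real.exp (-β)) * if σ i = σ j then 1 else 0) := by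
  rw [H_add, H_single, neg_add, Real.exp_add]
  split_ifs <;> simp

theorem log_Z_zero : Real.log (Z q N 0) = N * Real.log q := by
  simp [Z, H]

/-- The probability that the spins at `i` and `j` agree under the Boltzmann-Gibbs measure, that is,
the Gibbs average of `δ(σ_i, σ_j)`. -/
noncomputable def agreement (q : ℕ) (J : Fin N → Fin N → ℝ) (i j : Fin N) : ℝ :=
  ∑ σ : Fin N → Fin q, (if σ i = σ j then 1 else 0) * omega q N J σ

variable [NeZero q]

theorem Z_pos (J : Fin N → Fin N → ℝ) : 0 < Z q N J :=
  Finset.sum_pos (fun _ _ ↦ Real.exp_pos _) Finset.univ_nonempty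

theorem omega_nonneg (J : Fin N → Fin N → ℝ) (σ : Fin N → Fin q) : 0 ≤ omega q N J σ :=
  div_nonneg (Real.exp_pos _).le (Z_pos J).le

theorem sum_omega (J : Fin N → Fin N → ℝ) : ∑ σ, omega q N J σ = 1 := by
  simp only [omega, ← Finset.sum_div]
  exact div_self (Z_pos J).ne'

theorem agreement_nonneg (J : Fin N → Fin N → ℝ) (i j : Fin N) : 0 ≤ agreement q J i j :=
  Finset.sum_nonneg fun σ _ ↦ mul_nonneg (by split_ifs <;> norm_num) (omega_nonneg J σ)

theorem agreement_le_one (J : Fin N → Fin N → ℝ) (i j : Fin N) : agreement q J i j ≤ 1 := by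
  rw [← sum_omega (q := q) J]
  exact Finset.sum_le_sum fun σ _ ↦
    mul_le_of_le_one_left (omega_nonneg J σ) (by split_ifs <;> norm_num)

theorem Z_add_single (J : Fin N → Fin N → ℝ) (i j : Fin N) (β : ℝ) :
    Z q N (J + Pi.single i (Pi.single j β)) =
      Z q N J * (1 - (1 - Real.exp (-β)) * agreement q J i j) := by
  have hZ : Z q N J * agreement q J i j =
      ∑ σ : Fin N → Fin q, Real.exp (-H q N σ J) * if σ i = σ j then 1 else 0 := by
    rw [agreement, Finset.mul_sum]
    refine Finset.sum_congr rfl fun σ _ ↦ ?_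
    rw [omega, mul_left_comm, mul_div_cancel₀ _ (Z_pos J).ne', mul_comm]
  calc Z q N (J + Pi.single i (Pi.single j β))
      = ∑ σ, (Real.exp (-H q N σ J) -
          (1 - Real.exp (-β)) * (Real.exp (-H q N σ J) * if σ i = σ j then 1 else 0)) :=
        Finset.sum_congr rfl fun σ _ ↦ by rw [exp_neg_H_add_single]; ring
    _ = Z q N J - (1 - Real.exp (-β)) * (Z q N J * agreement q J i j) := by
        rw [Finset.sum_sub_distrib, ← Finset.mul_sum, hZ, Z]
    _ = Z q N J * (1 - (1 - Real.exp (-β)) * agreement q J i j) := by ring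

theorem log_Z_add_single_sub (J : Fin N → Fin N → ℝ) (i j : Fin N) (β : ℝ) :
    Real.log (Z q N (J + Pi.single i (Pi.single j β))) - Real.log (Z q N J) =
      Real.log (1 - (1 - Real.exp (-β)) * agreement q J i j) := by
  have hpos := Z_pos (q := q) (J + Pi.single i (Pi.single j β))
  rw [Z_add_single] at hpos ⊢
  rw [Real.log_mul (left_ne_zero_of_mul hpos.ne') (right_ne_zero_of_mul hpos.ne'),
    add_sub_cancel_left]

theorem abs_log_Z_le (J : Fin N → Fin N → ℝ) :
    |Real.log (Z q N J)| ≤ N * Real.log q + ∑ i, ∑ j, |J i j| := by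
  set B := ∑ i, ∑ j, |J i j|
  have hq : (0 : ℝ) < (q : ℝ) ^ N := pow_pos (by exact_mod_cast Nat.pos_of_neZero q) N
  have hconst (b : ℝ) : ∑ _σ : Fin N → Fin q, Real.exp b = (q : ℝ) ^ N * Real.exp b := by simp
  have hlog (b : ℝ) : Real.log ((q : ℝ) ^ N * Real.exp b) = N * Real.log q + b := by
    rw [Real.log_mul hq.ne' (Real.exp_pos b).ne', Real.log_pow, Real.log_exp]
  have hlower : (q : ℝ) ^ N * Real.exp (-B) ≤ Z q N J := by
    rw [← hconst]
    exact Finset.sum_le_sum fun σ _ ↦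
      Real.exp_le_exp.2 (neg_le_neg ((le_abs_self _).trans (abs_H_le σ J)))
  have hupper : Z q N J ≤ (q : ℝ) ^ N * Real.exp B := by
    rw [← hconst]
    exact Finset.sum_le_sum fun σ _ ↦
      Real.exp_le_exp.2 ((neg_le_abs _).trans (abs_H_le σ J))
  have hlog_lower := Real.log_le_log (mul_pos hq (Real.exp_pos _)) hlower
  have hlog_upper := Real.log_le_log (Z_pos J) hupper
  rw [hlog] at hlog_lower hlog_upper
  have hq_log : 0 ≤ N * Real.log q := mul_nonneg N.cast_nonneg (Real.log_natCast_nonneg q)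
  exact abs_le.2 ⟨by linarith, hlog_upper⟩

end Gibbs

section Replicas

variable {q N R : ℕ}

/-- The Gibbs average `⟨F⟩_{N,J}` of a function of `R` replicas. -/
noncomputable def replicaAverage (q R : ℕ) (J : Fin N → Fin N → ℝ)
    (F : (Fin R → Fin N → Fin q) → ℝ) : ℝ :=
  ∑ S : Fin R → Fin N → Fin q, F S * ∏ r, omega q N J (S r)

/-- The Gibbs average of the squared distance between the `R`-replica empirical measure and the
uniform law on `[q]^R`. -/
noncomputable def replicaVariance (q R : ℕ) (J : Fin N → Fin N → ℝ) : ℝ :=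
  ∑ s : Fin R → Fin q, replicaAverage q R J fun S ↦ (rho q N R S s - ((q : ℝ) ^ R)⁻¹) ^ 2

theorem replicaAverage_prod (J : Fin N → Fin N → ℝ) (f : (Fin N → Fin q) → ℝ) :
    (replicaAverage q R J fun S ↦ ∏ r, f (S r)) = (∑ σ, f σ * omega q N J σ) ^ R := by
  simp only [replicaAverage, Fintype.sum_pow, Finset.prod_mul_distrib]

theorem replicaAverage_sum {κ : Type*} (s : Finset κ) (J : Fin N → Fin N → ℝ)
    (F : κ → (Fin R → Fin N → Fin q) → ℝ) :
    (replicaAverage q R J fun S ↦ ∑ k ∈ s, F k S) = ∑ k ∈ s, replicaAverage q R J (F k) := by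
  simp only [replicaAverage, Finset.sum_mul]
  exact Finset.sum_comm

theorem sum_sq_rho (S : Fin R → Fin N → Fin q) :
    ∑ s, rho q N R S s ^ 2 =
      (∑ i, ∑ j, ∏ r, if S r i = S r j then (1 : ℝ) else 0) / (N : ℝ) ^ 2 := by
  simp only [rho, prod_ite_eq_ite_eq (fun r ↦ S r _), mul_pow, ← Finset.mul_sum, sq (∑ _, _),
    Finset.sum_mul_sum]
  rw [Finset.sum_comm, one_div, inv_pow, inv_mul_eq_div]
  congr! 2 with i
  simp only [Finset.mul_sum]
  rw [Finset.sum_comm]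
  congr! 1 with j
  simp [eq_comm]

theorem sum_rho [NeZero N] (S : Fin R → Fin N → Fin q) : ∑ s, rho q N R S s = 1 := by
  simp only [rho, prod_ite_eq_ite_eq (fun r ↦ S r _), ← Finset.mul_sum]
  rw [Finset.sum_comm]
  simp [NeZero.ne N]

variable [NeZero q]

theorem replicaAverage_div_sub_const (J : Fin N → Fin N → ℝ) (F : (Fin R → Fin N → Fin q) → ℝ)
    (a b : ℝ) :
    (replicaAverage q R J fun S ↦ F S / a - b) = replicaAverage q R J F / a - b := by
  have hone : ∑ S : Fin R → Fin N → Fin q, ∏ r, omega q N J (S r) = 1 := by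
    rw [← Fintype.sum_pow, sum_omega, one_pow]
  simp only [replicaAverage, sub_mul, div_mul_eq_mul_div, Finset.sum_sub_distrib, ← Finset.sum_div,
    ← Finset.mul_sum, hone, mul_one]

theorem replicaAverage_nonneg (J : Fin N → Fin N → ℝ) {F : (Fin R → Fin N → Fin q) → ℝ}
    (hF : ∀ S, 0 ≤ F S) : 0 ≤ replicaAverage q R J F :=
  Finset.sum_nonneg fun S _ ↦
    mul_nonneg (hF S) (Finset.prod_nonneg fun r _ ↦ omega_nonneg J (S r))

theorem replicaAverage_sq_rho_sub_nonneg (J : Fin N → Fin N → ℝ) (s : Fin R → Fin q) :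
    0 ≤ replicaAverage q R J fun S ↦ (rho q N R S s - ((q : ℝ) ^ R)⁻¹) ^ 2 :=
  replicaAverage_nonneg J fun _ ↦ sq_nonneg _

theorem replicaVariance_nonneg (J : Fin N → Fin N → ℝ) : 0 ≤ replicaVariance q R J :=
  Finset.sum_nonneg fun s _ ↦ replicaAverage_sq_rho_sub_nonneg J s

variable [NeZero N]

theorem sum_sq_rho_sub (S : Fin R → Fin N → Fin q) :
    ∑ s, (rho q N R S s - ((q : ℝ) ^ R)⁻¹) ^ 2 =
      (∑ i, ∑ j, ∏ r, if S r i = S r j then (1 : ℝ) else 0) / (N : ℝ) ^ 2 -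
        ((q : ℝ) ^ R)⁻¹ := by
  have hcard : ∑ _s : Fin R → Fin q, (((q : ℝ) ^ R)⁻¹) ^ 2 = ((q : ℝ) ^ R)⁻¹ := by
    have hq : (q : ℝ) ^ R ≠ 0 := pow_ne_zero R (NeZero.ne _)
    simp only [Finset.sum_const, Finset.card_univ, Fintype.card_pi_const, Fintype.card_fin,
      nsmul_eq_mul, Nat.cast_pow]
    field_simp
  simp only [sub_sq, Finset.sum_add_distrib, Finset.sum_sub_distrib, ← Finset.sum_mul,
    ← Finset.mul_sum, sum_rho, sum_sq_rho, hcard]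
  ring

theorem replicaVariance_eq (J : Fin N → Fin N → ℝ) :
    replicaVariance q R J =
      (∑ i, ∑ j, agreement q J i j ^ R) / (N : ℝ) ^ 2 - ((q : ℝ) ^ R)⁻¹ := by
  rw [replicaVariance, ← replicaAverage_sum]
  simp only [sum_sq_rho_sub, replicaAverage_div_sub_const, replicaAverage_sum]
  congr! 4 with i _ j _
  exact replicaAverage_prod J fun σ ↦ if σ i = σ j then 1 else 0

theorem replicaVariance_le_one (J : Fin N → Fin N → ℝ) : replicaVariance q R J ≤ 1 := by
  have hsum : ∑ i, ∑ j, agreement q J i j ^ R ≤ (N : ℝ) ^ 2 := by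
    calc ∑ i, ∑ j, agreement q J i j ^ R ≤ ∑ _i : Fin N, ∑ _j : Fin N, (1 : ℝ) := by
          gcongr with i _ j _
          exact pow_le_one₀ (agreement_nonneg J i j) (agreement_le_one J i j)
      _ = (N : ℝ) ^ 2 := by simp [sq]
  rw [replicaVariance_eq]
  have hdiv := div_le_one_of_le₀ hsum (by positivity)
  have hinv : 0 ≤ ((q : ℝ) ^ R)⁻¹ := by positivity
  linarith

theorem abs_replicaAverage_sq_rho_sub_le_one (J : Fin N → Fin N → ℝ) (s : Fin R → Fin q) :
    |replicaAverage q R J fun S ↦ (rho q N R S s - ((q : ℝ) ^ R)⁻¹) ^ 2| ≤ 1 := by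
  rw [abs_of_nonneg (replicaAverage_sq_rho_sub_nonneg J s)]
  have hle := Finset.single_le_sum (fun s _ ↦ replicaAverage_sq_rho_sub_nonneg J s)
    (Finset.mem_univ s)
  exact hle.trans (replicaVariance_le_one J)

theorem abs_pow_div_mul_replicaVariance_le (x : ℝ) (J : Fin N → Fin N → ℝ) :
    |x ^ (R + 1) / ((R : ℝ) + 1) * replicaVariance q (R + 1) J| ≤ |x| ^ (R + 1) := by
  have hvar := replicaVariance_nonneg (R := R + 1) (q := q) J
  calc |x ^ (R + 1) / ((R : ℝ) + 1) * replicaVariance q (R + 1) J|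
      = |x| ^ (R + 1) / ((R : ℝ) + 1) * replicaVariance q (R + 1) J := by
        rw [abs_mul, abs_div, abs_pow, abs_of_nonneg hvar,
          abs_of_pos (R.cast_add_one_pos (α := ℝ))]
    _ ≤ |x| ^ (R + 1) * 1 := by
        gcongr
        · exact div_le_self (by positivity) (by simp)
        · exact replicaVariance_le_one J
    _ = |x| ^ (R + 1) := mul_one _

/-- Twice the derivative in `c` of `𝒫(β,c) - p_N(β,c)` before averaging over the disorder `J`;
here `x` stands for `1 - e^{-β}`. -/
noncomputable def pressureGapRate (q : ℕ) (x : ℝ) (J : Fin N → Fin N → ℝ) : ℝ :=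
  Real.log (1 - x / q) - (∑ i, ∑ j, Real.log (1 - x * agreement q J i j)) / (N : ℝ) ^ 2

/- The Taylor series of `log (1 - x * y)`, averaged over the pairs `y = agreement q J i j` and
compared with `y = 1 / q`. -/
theorem hasSum_replicaVariance {x : ℝ} (hx : |x| < 1) (J : Fin N → Fin N → ℝ) :
    HasSum (fun R : ℕ ↦ x ^ (R + 1) / ((R : ℝ) + 1) * replicaVariance q (R + 1) J)
      (pressureGapRate q x J) := by
  have hlog {y : ℝ} (hy₀ : 0 ≤ y) (hy₁ : y ≤ 1) :
      HasSum (fun R : ℕ ↦ x ^ (R + 1) / ((R : ℝ) + 1) * y ^ (R + 1)) (-Real.log (1 - x * y)) := by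
    have hxy : |x * y| < 1 := by
      rw [abs_mul, abs_of_nonneg hy₀]
      exact (mul_le_of_le_one_right (abs_nonneg x) hy₁).trans_lt hx
    simpa only [mul_pow, mul_div_right_comm] using Real.hasSum_pow_div_log_of_abs_lt_one hxy
  have hpairs := (hasSum_sum fun i (_ : i ∈ Finset.univ) ↦ hasSum_sum fun j (_ : j ∈ Finset.univ) ↦
    hlog (agreement_nonneg (q := q) J i j) (agreement_le_one J i j)).div_const ((N : ℝ) ^ 2)
  have huniform := hlog (y := (q : ℝ)⁻¹) (by positivity) (Nat.cast_inv_le_one q)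
  have hterm (R : ℕ) : x ^ (R + 1) / ((R : ℝ) + 1) * replicaVariance q (R + 1) J =
      (∑ i, ∑ j, x ^ (R + 1) / ((R : ℝ) + 1) * agreement q J i j ^ (R + 1)) / (N : ℝ) ^ 2 -
        x ^ (R + 1) / ((R : ℝ) + 1) * (q : ℝ)⁻¹ ^ (R + 1) := by
    simp only [replicaVariance_eq, ← Finset.mul_sum, inv_pow]
    ring
  have hlimit : pressureGapRate q x J =
      (∑ i, ∑ j, -Real.log (1 - x * agreement q J i j)) / (N : ℝ) ^ 2 -
        -Real.log (1 - x * (q : ℝ)⁻¹) := by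
    simp only [pressureGapRate, Finset.sum_neg_distrib, ← div_eq_mul_inv]
    ring
  simpa only [hterm, hlimit] using hpairs.sub huniform

theorem abs_pressureGapRate_le {x : ℝ} (hx : |x| < 1) (J : Fin N → Fin N → ℝ) :
    |pressureGapRate q x J| ≤ ∑' R : ℕ, |x| ^ (R + 1) :=
  (hasSum_replicaVariance hx J).norm_le_of_bounded (summable_abs_pow_succ hx).hasSum
    fun _ ↦ abs_pow_div_mul_replicaVariance_le x J

end Replicas

section Disorder

variable {q N : ℕ}

/-- The coupling matrix `βJ` built from Poisson counts indexed by ordered pairs of sites. -/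
def coupling (β : ℝ) (J : Fin N × Fin N → ℕ) : Fin N → Fin N → ℝ :=
  fun i j ↦ β * J (i, j)

theorem coupling_zero (β : ℝ) : coupling β (0 : Fin N × Fin N → ℕ) = 0 := by
  ext i j
  simp [coupling]

theorem coupling_add_single (β : ℝ) (J : Fin N × Fin N → ℕ) (e : Fin N × Fin N) :
    coupling β (J + Pi.single e 1) = coupling β J + Pi.single e.1 (Pi.single e.2 β) := by
  ext i j
  rcases eq_or_ne i e.1 with rfl | hi <;> rcases eq_or_ne j e.2 with rfl | hj <;>
    simp [coupling, Prod.ext_iff, mul_add, *]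

theorem E_eq_poissonExpect (c : ℝ) (g : (Fin N → Fin N → ℕ) → ℝ) :
    E N (fun _ _ ↦ c) g =
      poissonExpect (c / (2 * N)) fun J : Fin N × Fin N → ℕ ↦ g fun i j ↦ J (i, j) := by
  rw [E, ← (Equiv.curry (Fin N) (Fin N) ℕ).tsum_eq]
  simp only [poissonExpect, poissonWeight, Fintype.prod_prod_type]
  rfl

theorem replicaQuenched_eq_poissonExpect (R : ℕ) (β c : ℝ)
    (F : (Fin R → Fin N → Fin q) → ℝ) :
    replicaQuenched q N R β c F =
      poissonExpect (c / (2 * N)) fun J ↦ replicaAverage q R (coupling β J) F :=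
  E_eq_poissonExpect c _

theorem p_eq_poissonExpect (β c : ℝ) :
    p q N β c =
      1 / N * poissonExpect (c / (2 * N)) fun J ↦ Real.log (Z q N (coupling β J)) := by
  rw [← poissonExpect_const_mul]
  exact E_eq_poissonExpect c _

theorem p_zero [NeZero N] (β : ℝ) : p q N β 0 = Real.log q := by
  rw [p_eq_poissonExpect, zero_div, poissonExpect_zero, coupling_zero, log_Z_zero, ← mul_assoc,
    one_div_mul_cancel (NeZero.ne _), one_mul]

variable [NeZero q]

theorem hasExpGrowth_log_Z_coupling (β : ℝ) :
    HasExpGrowth fun J : Fin N × Fin N → ℕ ↦ Real.log (Z q N (coupling β J)) := by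
  refine .of_abs_le_add_mul_sum (mul_nonneg N.cast_nonneg (Real.log_natCast_nonneg q))
    (abs_nonneg β) fun J ↦ (abs_log_Z_le _).trans_eq ?_
  simp [coupling, abs_mul, Finset.mul_sum, Fintype.sum_prod_type]

variable [NeZero N]

theorem poissonGenerator_log_Z_coupling (β : ℝ) (J : Fin N × Fin N → ℕ) :
    poissonGenerator (fun J ↦ Real.log (Z q N (coupling β J))) J =
      (N : ℝ) ^ 2 * (Real.log (1 - (1 - Real.exp (-β)) / q) -
        pressureGapRate q (1 - Real.exp (-β)) (coupling β J)) := by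
  simp only [poissonGenerator, coupling_add_single, log_Z_add_single_sub, Fintype.sum_prod_type,
    pressureGapRate, sub_sub_cancel]
  rw [mul_div_cancel₀ _ (pow_ne_zero 2 (NeZero.ne _))]

variable {β : ℝ}

theorem hasExpGrowth_pressureGapRate_coupling (hβ : -Real.log 2 < β) :
    HasExpGrowth fun J : Fin N × Fin N → ℕ ↦
      pressureGapRate q (1 - Real.exp (-β)) (coupling β J) :=
  .of_abs_le fun J ↦ abs_pressureGapRate_le (abs_one_sub_exp_neg_lt_one hβ) (coupling β J)

theorem hasDerivAt_annealed_sub_p (hβ : -Real.log 2 < β) (c : ℝ) :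
    HasDerivAt (fun c ↦ annealed q β c - p q N β c)
      (1 / 2 * poissonExpect (c / (2 * N)) fun J : Fin N × Fin N → ℕ ↦
        pressureGapRate q (1 - Real.exp (-β)) (coupling β J)) c := by
  have hannealed : HasDerivAt (fun c ↦ annealed q β c)
      (1 / 2 * Real.log (1 - (1 - Real.exp (-β)) / q)) c :=
    (((hasDerivAt_id c).div_const 2).mul_const _).const_add _
  have hp := ((hasDerivAt_poissonExpect (c / (2 * N))
    (hasExpGrowth_log_Z_coupling (q := q) (N := N) β)).comp c
      ((hasDerivAt_id c).div_const (2 * N : ℝ))).const_mul (1 / N : ℝ)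
  have hN : (N : ℝ) ≠ 0 := NeZero.ne _
  simp only [funext (poissonGenerator_log_Z_coupling β), poissonExpect_const_mul,
    poissonExpect_sub _ (hasExpGrowth_const _) (hasExpGrowth_pressureGapRate_coupling hβ),
    poissonExpect_const] at hp
  simp only [p_eq_poissonExpect]
  refine (hannealed.sub hp).congr_deriv ?_
  field_simp
  ring

theorem annealed_sub_p_eq_integral (hβ : -Real.log 2 < β) (c : ℝ) :
    annealed q β c - p q N β c =
      1 / 2 * ∫ c' in (0 : ℝ)..c, poissonExpect (c' / (2 * N)) fun J : Fin N × Fin N → ℕ ↦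
        pressureGapRate q (1 - Real.exp (-β)) (coupling β J) := by
  have hcont := (continuous_poissonExpect (hasExpGrowth_pressureGapRate_coupling
    (q := q) (N := N) hβ)).comp (continuous_id.div_const (2 * N : ℝ))
  have hftc := intervalIntegral.integral_eq_sub_of_hasDerivAt
    (fun c' _ ↦ hasDerivAt_annealed_sub_p (q := q) (N := N) hβ c')
    ((hcont.const_mul (1 / 2)).intervalIntegrable 0 c)
  rw [← intervalIntegral.integral_const_mul, hftc, p_zero]
  simp [annealed]

theorem sum_integral_replicaQuenched_eq (R : ℕ) (β c : ℝ) :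
    (∑ s : Fin R → Fin q, ∫ c' in (0 : ℝ)..c,
      replicaQuenched q N R β c' fun S ↦ (rho q N R S s - ((q : ℝ) ^ R)⁻¹) ^ 2) =
      ∫ c' in (0 : ℝ)..c, poissonExpect (c' / (2 * N)) fun J : Fin N × Fin N → ℕ ↦
        replicaVariance q R (coupling β J) := by
  have hgrowth (s : Fin R → Fin q) : HasExpGrowth fun J : Fin N × Fin N → ℕ ↦
      replicaAverage q R (coupling β J) fun S ↦ (rho q N R S s - ((q : ℝ) ^ R)⁻¹) ^ 2 :=
    .of_abs_le fun J ↦ abs_replicaAverage_sq_rho_sub_le_one (coupling β J) s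
  simp only [replicaQuenched_eq_poissonExpect, replicaVariance,
    poissonExpect_sum _ _ fun s _ ↦ hgrowth s]
  exact (intervalIntegral.integral_finsetSum fun s _ ↦ ((continuous_poissonExpect (hgrowth s)).comp
    (continuous_id.div_const (2 * N : ℝ))).intervalIntegrable 0 c).symm

theorem hasSum_integral_replicaVariance (hβ : -Real.log 2 < β) {c : ℝ} (hc : 0 ≤ c) :
    HasSum (fun R : ℕ ↦ (1 - Real.exp (-β)) ^ (R + 1) / ((R : ℝ) + 1) *
        ∫ c' in (0 : ℝ)..c, poissonExpect (c' / (2 * N)) fun J : Fin N × Fin N → ℕ ↦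
          replicaVariance q (R + 1) (coupling β J))
      (∫ c' in (0 : ℝ)..c, poissonExpect (c' / (2 * N)) fun J : Fin N × Fin N → ℕ ↦
        pressureGapRate q (1 - Real.exp (-β)) (coupling β J)) := by
  have hx := abs_one_sub_exp_neg_lt_one hβ
  have hmean : ∀ c' ∈ Set.uIoc 0 c, 0 ≤ c' / (2 * N : ℝ) := fun c' hc' ↦ by
    rw [Set.uIoc_of_le hc] at hc'
    exact div_nonneg hc'.1.le (by positivity)
  simp only [← intervalIntegral.integral_const_mul, ← poissonExpect_const_mul]
  exact hasSum_integral_poissonExpect_of_dominated (continuous_id.div_const (2 * N : ℝ)) hmean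
    (summable_abs_pow_succ hx) (fun R J ↦ abs_pow_div_mul_replicaVariance_le _ (coupling β J))
    fun J ↦ hasSum_replicaVariance hx (coupling β J)

end Disorder

end potts

theorem statement3_general (q N : ℕ) [NeZero q] [NeZero N] (β c : ℝ)
    (hβ : -Real.log 2 < β) (hc : 0 ≤ c) :
    potts.annealed q β c - potts.p q N β c =
      (1 / 2) * ∑' R : ℕ,
        ((1 - Real.exp (-β)) ^ (R + 1) / ((R : ℝ) + 1)) *
          ∑ s : Fin (R + 1) → Fin q,
            ∫ c' in (0 : ℝ)..c,
              potts.replicaQuenched q N (R + 1) β c'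
                (fun S =>
                  (potts.rho q N (R + 1) S s - ((q : ℝ) ^ (R + 1))⁻¹) ^ 2) := by
  simp only [potts.sum_integral_replicaQuenched_eq]
  rw [(potts.hasSum_integral_replicaVariance hβ hc).tsum_eq,
    potts.annealed_sub_p_eq_integral hβ c]

/-- sum rule expressing `𝒫(β,c) - p_N(β,c)` via replica overlaps. -/
theorem statement3 (q N : ℕ) (hq : 2 ≤ q) (hN : 0 < N) (β c : ℝ)
    (hβ : 0 ≤ β) (hc : 0 ≤ c) :
    potts.annealed q β c - potts.p q N β c =
      (1 / 2) * ∑' R : ℕ,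
        ((1 - Real.exp (-β)) ^ (R + 1) / ((R : ℝ) + 1)) *
          ∑ s : Fin (R + 1) → Fin q,
            ∫ c' in (0 : ℝ)..c,
              potts.replicaQuenched q N (R + 1) β c'
                (fun S =>
                  (potts.rho q N (R + 1) S s - ((q : ℝ) ^ (R + 1))⁻¹) ^ 2) := by
  have : NeZero q := ⟨by omega⟩
  have : NeZero N := ⟨hN.ne'⟩
  exact statement3_general q N β c ((neg_neg_of_pos (Real.log_pos one_lt_two)).trans_le hβ) hc
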